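/- Let x : [0,1] → ℝ be regular (in particular continuous and strictly increasing). Then the HK update Tx is a constant function if and only if x(1) − x(0) ≤ 1. -/

import Mathlib

open MeasureTheory Set

/-- The neighbourhood set `N_x(α) = {β ∈ [0,1] : |x(β) − x(α)| ≤ 1}`. -/
def hkNbhd (x : ℝ → ℝ) (α : ℝ) : Set ℝ :=
  {β | β ∈ Icc (0:ℝ) 1 ∧ |x β - x α| ≤ 1}

/-- The continuous-agent Hegselmann–Krause update
`Tx(α) = (∫_{N_x(α)} x dμ) / μ(N_x(α))`. -/
noncomputable def hkT (x : ℝ → ℝ) : ℝ → ℝ :=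
  fun α => (∫ β in hkNbhd x α, x β) / (volume (hkNbhd x α)).toReal

/-- A function `x : [0,1] → ℝ` is regular if it is continuous, nondecreasing,
differentiable outside a set of measure zero, and there are constants
`0 < m ≤ M` with `m ≤ x′ ≤ M` wherever the derivative exists. -/
def Regular (x : ℝ → ℝ) : Prop :=
  ContinuousOn x (Icc 0 1) ∧ MonotoneOn x (Icc 0 1) ∧
  ∃ m M : ℝ, 0 < m ∧ m ≤ M ∧
    (∀ᵐ α ∂(volume.restrict (Icc (0:ℝ) 1)), DifferentiableAt ℝ x α) ∧
    ∀ α ∈ Icc (0:ℝ) 1, DifferentiableAt ℝ x α → m ≤ deriv x α ∧ deriv x α ≤ M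

/-!
Some agent `p` holds the lowest opinion and some agent `q` the highest one. If these opinions differ
by more than `1`, then the agents that `p` ignores all hold higher opinions than the ones it listens
to, so `T x p` lies strictly below the mean opinion; by reflection `T x q` lies strictly above it,
and `T x` is not constant. If they differ by at most `1`, every agent averages over all of `[0,1]`.
-/

open Topology

section Measure

variable {α : Type*} [MeasurableSpace α] {μ : Measure α} {s t : Set α}

lemma measure_pos_of_mem_nhdsWithin_of_mem_closure_interior [TopologicalSpace α]
    [μ.IsOpenPosMeasure] {a : α} (ha : a ∈ closure (interior s)) (ht : t ∈ 𝓝[s] a) : 0 < μ t := by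
  obtain ⟨u, hu, hau, hut⟩ := mem_nhdsWithin.1 ht
  have hne : (u ∩ interior s).Nonempty := mem_closure_iff.1 ha u hu hau
  calc
    0 < μ (u ∩ interior s) := (hu.inter isOpen_interior).measure_pos μ hne
    _ ≤ μ t := measure_mono fun _ hb ↦ hut ⟨hb.1, interior_subset hb.2⟩

lemma measure_pos_of_mem_nhdsWithin_Icc {ν : Measure ℝ} [ν.IsOpenPosMeasure] {u : Set ℝ}
    {a b c : ℝ} (hab : a < b) (hc : c ∈ Icc a b) (hu : u ∈ 𝓝[Icc a b] c) : 0 < ν u := by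
  refine measure_pos_of_mem_nhdsWithin_of_mem_closure_interior ?_ hu
  rwa [closure_interior_Icc hab.ne]

variable {f : α → ℝ}

lemma setAverage_lt_setAverage_of_forall_lt (hs₀ : μ s ≠ 0) (hs : μ s ≠ ⊤) (ht₀ : μ t ≠ 0)
    (ht : μ t ≠ ⊤) (hfs : IntegrableOn f s μ) (hft : IntegrableOn f t μ)
    (hlt : ∀ a ∈ s, ∀ b ∈ t, f a < f b) : ⨍ a in s, f a ∂μ < ⨍ a in t, f a ∂μ := by
  obtain ⟨a, ha, hsa⟩ := exists_setAverage_le hs₀ hs hfs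
  obtain ⟨b, hb, hbt⟩ := exists_le_setAverage ht₀ ht hft
  exact hsa.trans_lt ((hlt a ha b hb).trans_le hbt)

lemma setAverage_lt_setAverage_of_subset (hst : s ⊆ t) (hdm : NullMeasurableSet (t \ s) μ)
    (hs₀ : μ s ≠ 0) (hd₀ : μ (t \ s) ≠ 0) (ht : μ t ≠ ⊤) (hf : IntegrableOn f t μ)
    (hlt : ∀ a ∈ s, ∀ b ∈ t \ s, f a < f b) : ⨍ a in s, f a ∂μ < ⨍ a in t, f a ∂μ := by
  have hs : μ s ≠ ⊤ := measure_ne_top_of_subset hst ht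
  have hd : μ (t \ s) ≠ ⊤ := measure_ne_top_of_subset sdiff_subset ht
  have hfs : IntegrableOn f s μ := hf.mono_set hst
  have hfd : IntegrableOn f (t \ s) μ := hf.mono_set sdiff_subset
  have hmem : ⨍ a in t, f a ∂μ ∈ openSegment ℝ (⨍ a in s, f a ∂μ) (⨍ a in t \ s, f a ∂μ) := by
    have hunion := average_union_mem_openSegment disjoint_sdiff_right.aedisjoint hdm
      hs₀ hd₀ hs hd hfs hfd
    rwa [union_sdiff_cancel hst] at hunion
  rw [openSegment_eq_Ioo
    (setAverage_lt_setAverage_of_forall_lt hs₀ hs hd₀ hd hfs hfd hlt)] at hmem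
  exact hmem.1

end Measure

lemma exists_isMinOn_isMaxOn_diam_image_eq {X : Type*} [TopologicalSpace X] {K : Set X}
    {f : X → ℝ} (hK : IsCompact K) (hne : K.Nonempty) (hf : ContinuousOn f K) :
    ∃ p ∈ K, ∃ q ∈ K, IsMinOn f K p ∧ IsMaxOn f K q ∧ Metric.diam (f '' K) = f q - f p := by
  obtain ⟨p, hp, hmin⟩ := hK.exists_isMinOn hne hf
  obtain ⟨q, hq, hmax⟩ := hK.exists_isMaxOn hne hf
  have himage : f '' K ⊆ Icc (f p) (f q) := image_subset_iff.2 fun a ha ↦ ⟨hmin ha, hmax ha⟩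
  refine ⟨p, hp, q, hq, hmin, hmax, le_antisymm ?_ ?_⟩
  · exact (Metric.diam_mono himage (Metric.isBounded_Icc _ _)).trans_eq (Real.diam_Icc (hmin hq))
  · calc
      f q - f p ≤ dist (f q) (f p) := le_abs_self _
      _ ≤ Metric.diam (f '' K) :=
        Metric.dist_le_diam_of_mem (hK.image_of_continuousOn hf).isBounded
          (mem_image_of_mem f hq) (mem_image_of_mem f hp)

section HegselmannKrause

variable {x : ℝ → ℝ} {p q α : ℝ}

lemma hkT_eq_setAverage (x : ℝ → ℝ) (α : ℝ) : hkT x α = ⨍ β in hkNbhd x α, x β := by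
  rw [hkT, setAverage_eq, smul_eq_mul, div_eq_inv_mul, Measure.real]

lemma hkNbhd_neg (x : ℝ → ℝ) (α : ℝ) : hkNbhd (-x) α = hkNbhd x α := by
  ext β
  simp only [hkNbhd, mem_ofPred_eq, Pi.neg_apply, ← neg_sub', abs_neg]

lemma hkT_neg (x : ℝ → ℝ) (α : ℝ) : hkT (-x) α = -hkT x α := by
  simp only [hkT_eq_setAverage, hkNbhd_neg, Pi.neg_apply, average_neg]

lemma hkNbhd_subset_Icc (x : ℝ → ℝ) (α : ℝ) : hkNbhd x α ⊆ Icc 0 1 := fun _ hβ ↦ hβ.1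

lemma isClosed_hkNbhd (hx : ContinuousOn x (Icc 0 1)) (α : ℝ) : IsClosed (hkNbhd x α) :=
  (hx.sub continuousOn_const).abs.preimage_isClosed_of_isClosed isClosed_Icc isClosed_Iic

lemma hkNbhd_mem_nhdsWithin (hx : ContinuousWithinAt x (Icc 0 1) α) :
    hkNbhd x α ∈ 𝓝[Icc 0 1] α := by
  have hball : x ⁻¹' Metric.closedBall (x α) 1 ∈ 𝓝[Icc 0 1] α :=
    hx (Metric.closedBall_mem_nhds _ one_pos)
  exact Filter.inter_mem self_mem_nhdsWithin hball

lemma hkT_lt_setAverage_of_isMinOn (hx : ContinuousOn x (Icc 0 1)) (hp : p ∈ Icc (0 : ℝ) 1)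
    (hmin : IsMinOn x (Icc 0 1) p) (hq : q ∈ Icc (0 : ℝ) 1) (hpq : x p + 1 < x q) :
    hkT x p < ⨍ β in Icc 0 1, x β := by
  have hlt : ∀ a ∈ hkNbhd x p, ∀ b ∈ Icc 0 1 \ hkNbhd x p, x a < x b := by
    rintro a ⟨-, ha⟩ b ⟨hb, hbp⟩
    have hb' : 1 < |x b - x p| := not_le.1 fun h ↦ hbp ⟨hb, h⟩
    rw [abs_of_nonneg (sub_nonneg.2 (hmin hb))] at hb'
    linarith [le_abs_self (x a - x p)]
  have hqp : q ∉ hkNbhd x p := fun h ↦ by linarith [le_abs_self (x q - x p), h.2]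
  have hclosed := isClosed_hkNbhd hx p
  have hnear : 0 < volume (hkNbhd x p) :=
    measure_pos_of_mem_nhdsWithin_Icc zero_lt_one hp (hkNbhd_mem_nhdsWithin (hx p hp))
  have hfar : 0 < volume (Icc 0 1 \ hkNbhd x p) :=
    measure_pos_of_mem_nhdsWithin_Icc zero_lt_one hq (Filter.inter_mem self_mem_nhdsWithin
      (mem_nhdsWithin_of_mem_nhds (hclosed.isOpen_compl.mem_nhds hqp)))
  rw [hkT_eq_setAverage]
  exact setAverage_lt_setAverage_of_subset (hkNbhd_subset_Icc x p)
    (measurableSet_Icc.diff hclosed.measurableSet).nullMeasurableSet hnear.ne' hfar.ne'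
    measure_Icc_lt_top.ne hx.integrableOn_Icc hlt

lemma setAverage_lt_hkT_of_isMaxOn (hx : ContinuousOn x (Icc 0 1)) (hp : p ∈ Icc (0 : ℝ) 1)
    (hq : q ∈ Icc (0 : ℝ) 1) (hmax : IsMaxOn x (Icc 0 1) q) (hpq : x p + 1 < x q) :
    ⨍ β in Icc 0 1, x β < hkT x q := by
  have hneg : hkT (-x) q < ⨍ β in Icc 0 1, (-x) β :=
    hkT_lt_setAverage_of_isMinOn hx.neg hq hmax.neg hp (by simp only [Pi.neg_apply]; linarith)
  simpa only [hkT_neg, Pi.neg_apply, average_neg, neg_lt_neg_iff] using hneg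

lemma hkNbhd_eq_Icc_of_diam_le_one (hbdd : Bornology.IsBounded (x '' Icc 0 1))
    (hdiam : Metric.diam (x '' Icc 0 1) ≤ 1) (hα : α ∈ Icc (0 : ℝ) 1) :
    hkNbhd x α = Icc 0 1 := by
  refine (hkNbhd_subset_Icc x α).antisymm fun β hβ ↦ ⟨hβ, ?_⟩
  have hdist : dist (x β) (x α) ≤ Metric.diam (x '' Icc 0 1) :=
    Metric.dist_le_diam_of_mem hbdd (mem_image_of_mem x hβ) (mem_image_of_mem x hα)
  exact hdist.trans hdiam

end HegselmannKrause

theorem hk_consensus_iff_range_le_one_general {x : ℝ → ℝ} (hx : ContinuousOn x (Icc 0 1)) :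
    (∃ c : ℝ, ∀ α ∈ Icc (0 : ℝ) 1, hkT x α = c) ↔ Metric.diam (x '' Icc 0 1) ≤ 1 := by
  constructor
  · rintro ⟨c, hc⟩
    obtain ⟨p, hp, q, hq, hmin, hmax, hdiam⟩ :=
      exists_isMinOn_isMaxOn_diam_image_eq isCompact_Icc (nonempty_Icc.2 zero_le_one) hx
    by_contra! hgt
    have hpq : x p + 1 < x q := by linarith
    have hlt : hkT x p < hkT x q :=
      (hkT_lt_setAverage_of_isMinOn hx hp hmin hq hpq).trans
        (setAverage_lt_hkT_of_isMaxOn hx hp hq hmax hpq)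
    exact hlt.ne ((hc p hp).trans (hc q hq).symm)
  · intro hdiam
    have hbdd : Bornology.IsBounded (x '' Icc 0 1) :=
      (isCompact_Icc.image_of_continuousOn hx).isBounded
    refine ⟨⨍ β in Icc 0 1, x β, fun α hα ↦ ?_⟩
    rw [hkT_eq_setAverage, hkNbhd_eq_Icc_of_diam_le_one hbdd hdiam hα]

/-- For a regular (hence continuous and strictly increasing) opinion function,
the HK update is constant iff the range of opinions is at most one. -/
theorem hk_consensus_iff_range_le_one (x : ℝ → ℝ) (hreg : Regular x) :
    (∃ c : ℝ, ∀ α ∈ Icc (0:ℝ) 1, hkT x α = c) ↔ x 1 - x 0 ≤ 1 := by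
  rw [hk_consensus_iff_range_le_one_general hreg.1,
    hreg.1.image_Icc_of_monotoneOn zero_le_one hreg.2.1,
    Real.diam_Icc (hreg.2.1 (by simp) (by simp) zero_le_one)]
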